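/- Fix an integer N̄ ≥ 1 and let T > 0 and ℓ ∈ (0,1). Suppose v ∈ C^∞([0,T]×𝕋³;ℝ³) and g ∈ C^∞([0,T]×𝕋³) satisfy, for all integers N with 1 ≤ N ≤ N̄, the bounds ‖v‖_N ≤ ℓ^{−N} v_F and ‖g‖_N ≤ g_F for some positive constants v_F and g_F. Then there is a constant C, depending only on N̄ and the fixed cutoff function φ, such that for every f ∈ C^∞([0,T]×𝕋³) and every integer N with 0 ≤ N ≤ N̄, ‖[v·∇, P_{≤ℓ^{−1}}](fg) − ([v·∇, P_{≤ℓ^{−1}}]f)·g‖_N ≤ C (ℓ^{1−N} ‖∇f‖₀ + ℓ^{−N} ‖f‖₀) v_F g_F, where [v·∇, P_{≤ℓ^{−1}}]h = v·∇(P_{≤ℓ^{−1}}h) − P_{≤ℓ^{−1}}(v·∇h). -/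

import Mathlib

open MeasureTheory

noncomputable section

/-- Points of `ℝ³`. -/
abbrev V3 : Type := Fin 3 → ℝ

/-- The fundamental domain `[-π, π]³` of the torus `𝕋³`. -/
def T3 : Set V3 := Set.Icc (fun _ => -Real.pi) (fun _ => Real.pi)

/-- The `i`-th standard basis vector of `ℝ³`. -/
def e3 (i : Fin 3) : V3 := Pi.single i 1

/-- A time-dependent function on `ℝ³` is (`2π`-)periodic in space. -/
def PerSpaceT {α : Type*} (f : ℝ × V3 → α) : Prop :=
  ∀ (t : ℝ) (x : V3) (v : Fin 3 → ℤ), f (t, fun i => x i + 2 * Real.pi * v i) = f (t, x)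

/-- Partial derivative in the `i`-th space direction. -/
def pX {F : Type*} [NormedAddCommGroup F] [NormedSpace ℝ F]
    (i : Fin 3) (f : ℝ × V3 → F) (tx : ℝ × V3) : F :=
  fderiv ℝ (fun y => f (tx.1, y)) tx.2 (e3 i)

/-- The Euclidean norm on `ℝ³`. -/
def enorm3 (x : V3) : ℝ := Real.sqrt (∑ i, x i ^ 2)

/-- `Jof S` is the largest integer `J` with `2^J ≤ S`. -/
def Jof (S : ℝ) : ℤ := ⌊Real.logb 2 S⌋

/-- The `k`-th Fourier coefficient of a (`2π`-)periodic function on `ℝ³`. -/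
def fcoef (g : V3 → ℝ) (k : Fin 3 → ℤ) : ℂ :=
  (((2 * Real.pi) ^ (3 : ℕ))⁻¹ : ℝ) •
    ∫ x in T3, (g x : ℂ) * Complex.exp (-(Complex.I * ((∑ i, (k i : ℝ) * x i : ℝ) : ℂ)))

/-- The low-frequency cutoff `P_{≤S}` associated with the cutoff function `φ`. -/
def Pse (φ : V3 → ℝ) (S : ℝ) (g : V3 → ℝ) (x : V3) : ℝ :=
  (∑' k : Fin 3 → ℤ,
      ((φ (fun i => (k i : ℝ) / (2 : ℝ) ^ Jof S) : ℝ) : ℂ) * fcoef g k *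
        Complex.exp (Complex.I * ((∑ i, (k i : ℝ) * x i : ℝ) : ℂ))).re

/-- `P_{≤S}` applied in the space variable to a time-dependent function. -/
def PseT (φ : V3 → ℝ) (S : ℝ) (f : ℝ × V3 → ℝ) (tx : ℝ × V3) : ℝ :=
  Pse φ S (fun y => f (tx.1, y)) tx.2

/-- The hypotheses on the fixed cutoff function `φ`. -/
def IsCutoff (φ : V3 → ℝ) : Prop :=
  ContDiff ℝ (⊤ : ℕ∞) φ ∧ (∀ x y : V3, enorm3 x = enorm3 y → φ x = φ y) ∧
    (∀ x : V3, enorm3 x ≤ 1 → φ x = 1) ∧ (∀ x : V3, 2 ≤ enorm3 x → φ x = 0)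

/-- The commutator `[g, P_{≤ℓ⁻¹}] f = g · P_{≤ℓ⁻¹} f - P_{≤ℓ⁻¹}(g f)`. -/
def commMul (φ : V3 → ℝ) (ℓ : ℝ) (g f : ℝ × V3 → ℝ) (tx : ℝ × V3) : ℝ :=
  g tx * PseT φ ℓ⁻¹ f tx - PseT φ ℓ⁻¹ (fun s => g s * f s) tx

/-- The commutator `[v·∇, P_{≤ℓ⁻¹}] F = v·∇(P_{≤ℓ⁻¹}F) - P_{≤ℓ⁻¹}(v·∇F)`. -/
def commAdv (φ : V3 → ℝ) (ℓ : ℝ) (v : ℝ × V3 → V3) (F : ℝ × V3 → ℝ) (tx : ℝ × V3) : ℝ :=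
  (∑ i : Fin 3, v tx i * pX i (PseT φ ℓ⁻¹ F) tx)
    - PseT φ ℓ⁻¹ (fun s => ∑ i : Fin 3, v s i * pX i F s) tx

/-- The commutator `[v·∇, P_{>ℓ⁻¹}] F` with the high-frequency cutoff `P_{>S} = id - P_{≤S}`. -/
def commAdvHigh (φ : V3 → ℝ) (ℓ : ℝ) (v : ℝ × V3 → V3) (F : ℝ × V3 → ℝ) (tx : ℝ × V3) : ℝ :=
  (∑ i : Fin 3, v tx i * pX i (fun s => F s - PseT φ ℓ⁻¹ F s) tx)
    - ((∑ i : Fin 3, v tx i * pX i F tx)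
        - PseT φ ℓ⁻¹ (fun s => ∑ i : Fin 3, v s i * pX i F s) tx)

/-- The character `x ↦ exp (i k·x)`. -/
def torusChar (k : Fin 3 → ℤ) (x : V3) : ℂ :=
  Complex.exp (Complex.I * ((∑ i, (k i : ℝ) * x i : ℝ) : ℂ))

theorem norm_torusChar (k : Fin 3 → ℤ) (x : V3) : ‖torusChar k x‖ = 1 := by
  rw [torusChar, mul_comm, Complex.norm_exp_ofReal_mul_I]

theorem torusChar_add (k : Fin 3 → ℤ) (x y : V3) :
    torusChar k (x + y) = torusChar k x * torusChar k y := by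
  simp only [torusChar, ← Complex.exp_add, Pi.add_apply, mul_add, Finset.sum_add_distrib]
  push_cast
  ring_nf

theorem torusChar_add_left (k m : Fin 3 → ℤ) (x : V3) :
    torusChar (k + m) x = torusChar k x * torusChar m x := by
  simp only [torusChar, ← Complex.exp_add, Pi.add_apply, Int.cast_add, add_mul,
    Finset.sum_add_distrib]
  push_cast
  ring_nf

theorem torusChar_neg (k : Fin 3 → ℤ) (x : V3) :
    torusChar k (-x) = Complex.exp (-(Complex.I * ((∑ i, (k i : ℝ) * x i : ℝ) : ℂ))) := by
  simp [torusChar]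

theorem torusChar_mul_neg (k : Fin 3 → ℤ) (x : V3) : torusChar k x * torusChar k (-x) = 1 := by
  rw [← torusChar_add]
  simp [torusChar]

theorem torusChar_period (k : Fin 3 → ℤ) (x : V3) (n : Fin 3 → ℤ) :
    torusChar k (fun i => x i + 2 * Real.pi * n i) = torusChar k x := by
  have : torusChar k (fun i => x i + 2 * Real.pi * n i)
      = torusChar k x * Complex.exp ((∑ i, k i * n i : ℤ) * (2 * Real.pi * Complex.I)) := by
    rw [torusChar, torusChar, ← Complex.exp_add]
    congr 1
    push_cast
    simp only [Fin.sum_univ_three]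
    ring
  rw [this, Complex.exp_int_mul_two_pi_mul_I, mul_one]

theorem contDiff_torusChar (k : Fin 3 → ℤ) : ContDiff ℝ (⊤ : ℕ∞) (torusChar k) := by
  unfold torusChar
  refine Complex.contDiff_exp.comp (contDiff_const.mul (Complex.ofRealCLM.contDiff.comp ?_))
  exact ContDiff.sum (s := Finset.univ) fun i _ =>
    (contDiff_const (c := (k i : ℝ))).mul (contDiff_apply ℝ ℝ i)

theorem hasFDerivAt_torusChar (k : Fin 3 → ℤ) (x : V3) :
    HasFDerivAt (torusChar k)
      (∑ i, (ContinuousLinearMap.proj (R := ℝ) (φ := fun _ : Fin 3 => ℝ) i).smulRight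
        (Complex.I * (k i : ℂ) * torusChar k x)) x := by
  have h1 : HasFDerivAt (fun x : V3 => ∑ i, (k i : ℝ) * x i)
      (∑ i, (k i : ℝ) • ContinuousLinearMap.proj (R := ℝ) (φ := fun _ : Fin 3 => ℝ) i) x :=
    HasFDerivAt.fun_sum fun i _ => (ContinuousLinearMap.hasFDerivAt
      (ContinuousLinearMap.proj (R := ℝ) (φ := fun _ : Fin 3 => ℝ) i)).const_mul (k i : ℝ)
  have h2 := ((Complex.ofRealCLM.hasFDerivAt.comp x h1).const_mul Complex.I).cexp
  refine h2.congr_fderiv ?_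
  ext w
  simp [torusChar, Finset.mul_sum]
  refine Finset.sum_congr rfl fun i _ => ?_
  ring

/-- Functions on `ℝ³` that are `2π`-periodic in every coordinate. -/
def PerSpace {α : Type*} (f : V3 → α) : Prop :=
  ∀ (x : V3) (n : Fin 3 → ℤ), f (fun i => x i + 2 * Real.pi * n i) = f x

/-- The half-open period cell with lower corner `a`. -/
def periodCell (a : V3) : Set V3 := {x | ∀ i, x i ∈ Set.Ico (a i) (a i + 2 * Real.pi)}

theorem T3_ae_eq_periodCell : T3 =ᵐ[volume] periodCell (fun _ => -Real.pi) := by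
  have : periodCell (fun _ => -Real.pi)
      = Set.univ.pi (fun _ : Fin 3 => Set.Ico (-Real.pi) Real.pi) := by
    ext x
    simp only [periodCell, Set.mem_ofPred_eq, Set.mem_univ_pi]
    ring_nf
  rw [this, T3]
  exact (Measure.univ_pi_Ico_ae_eq_Icc (μ := fun _ : Fin 3 => (volume : Measure ℝ))).symm

/-- The basis `2π e_i` of the period lattice. -/
def periodBasis : Module.Basis (Fin 3) ℝ V3 :=
  (Pi.basisFun ℝ (Fin 3)).isUnitSMul (w := fun _ => 2 * Real.pi)
    (fun _ => (IsUnit.mk0 _ (by positivity)))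

theorem periodBasis_apply (i : Fin 3) : periodBasis i = (2 * Real.pi) • e3 i := by
  simp [periodBasis, Module.Basis.isUnitSMul_apply, e3]

theorem periodBasis_repr (x : V3) (i : Fin 3) : periodBasis.repr x i = x i / (2 * Real.pi) := by
  simp [periodBasis, Module.Basis.repr_isUnitSMul, Units.smul_def, div_eq_inv_mul]

open scoped Pointwise in
theorem periodCell_eq_vadd (a : V3) :
    periodCell a = a +ᵥ ZSpan.fundamentalDomain periodBasis := by
  have hp : 0 < 2 * Real.pi := by positivity
  ext x
  rw [Set.mem_vadd_set_iff_neg_vadd_mem, ZSpan.mem_fundamentalDomain]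
  simp only [periodCell, Set.mem_ofPred_eq, periodBasis_repr, Set.mem_Ico]
  refine forall_congr' fun i => ?_
  rw [le_div_iff₀ hp, div_lt_iff₀ hp]
  simp only [vadd_eq_add, Pi.add_apply, Pi.neg_apply]
  constructor <;> rintro ⟨h1, h2⟩ <;> constructor <;> linarith

open scoped Pointwise in
theorem PerSpace.setIntegral_periodCell {E : Type*} [NormedAddCommGroup E] [NormedSpace ℝ E]
    {f : V3 → E} (hf : PerSpace f) (a b : V3) :
    ∫ x in periodCell a, f x = ∫ x in periodCell b, f x := by
  rw [periodCell_eq_vadd, periodCell_eq_vadd]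
  have h0 := ZSpan.isAddFundamentalDomain periodBasis (volume : Measure V3)
  have hinv : VAddInvariantMeasure (Submodule.span ℤ (Set.range periodBasis)) V3 volume :=
    ⟨fun c s _ => measure_preimage_add volume (c : V3) s⟩
  refine (h0.vadd_of_comm a).setIntegral_eq (h0.vadd_of_comm b) ?_
  rintro ⟨g, hg⟩ x
  obtain ⟨c, rfl⟩ := (Submodule.mem_span_range_iff_exists_fun ℤ).1 hg
  rw [← hf x c]
  congr 1
  ext i
  simp [Submodule.vadd_def, periodBasis_apply, e3, Pi.single_apply, add_comm, mul_comm]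

theorem PerSpace.setIntegral_T3_add {E : Type*} [NormedAddCommGroup E] [NormedSpace ℝ E]
    {f : V3 → E} (hf : PerSpace f) (a : V3) :
    ∫ x in T3, f x = ∫ x in T3, f (a + x) := by
  rw [setIntegral_congr_set T3_ae_eq_periodCell, setIntegral_congr_set T3_ae_eq_periodCell,
    hf.setIntegral_periodCell _ (a + fun _ => -Real.pi)]
  have h := (measurePreserving_add_left (volume : Measure V3) a).setIntegral_preimage_emb
    (measurableEmbedding_addLeft a) f (periodCell (a + fun _ => -Real.pi))
  rw [← h]
  congr 2
  ext x
  simp only [periodCell, Set.mem_preimage, Set.mem_ofPred_eq, Pi.add_apply, add_assoc,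
    Set.mem_Ico, add_le_add_iff_left, add_lt_add_iff_left]

/-- The trigonometric polynomial with coefficients `c`. -/
def torusKernel (c : (Fin 3 → ℤ) → ℂ) (y : V3) : ℂ := ∑' k, c k * torusChar k y

theorem fwdDiff_support_finite {c : (Fin 3 → ℤ) → ℂ} (hc : c.support.Finite) (m : Fin 3 → ℤ) :
    (fwdDiff m c).support.Finite := by
  refine ((hc.preimage (add_left_injective m).injOn).union hc).subset fun k hk => ?_
  by_contra h
  simp only [Set.mem_union, Set.mem_preimage, Function.mem_support, not_or, not_not] at h
  exact hk (by simp [fwdDiff, h.1, h.2])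

theorem fwdDiff_iter_support_finite {c : (Fin 3 → ℤ) → ℂ} (hc : c.support.Finite)
    (m : Fin 3 → ℤ) (n : ℕ) : ((fwdDiff m)^[n] c).support.Finite := by
  induction n with
  | zero => simpa using hc
  | succ n ih =>
    rw [Function.iterate_succ_apply']
    exact fwdDiff_support_finite ih m

theorem summable_torusKernel {c : (Fin 3 → ℤ) → ℂ} (hc : c.support.Finite) (y : V3) :
    Summable fun k => c k * torusChar k y :=
  summable_of_hasFiniteSupport (hc.subset fun k hk h => hk (by simp [h]))

theorem torusKernel_fwdDiff {c : (Fin 3 → ℤ) → ℂ} (hc : c.support.Finite) (m : Fin 3 → ℤ)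
    (y : V3) :
    torusKernel (fwdDiff m c) y = (torusChar m (-y) - 1) * torusKernel c y := by
  have hs := summable_torusKernel hc y
  have h1 : ∀ k, fwdDiff m c k * torusChar k y
      = torusChar m (-y) * (c (k + m) * torusChar (k + m) y) - c k * torusChar k y := by
    intro k
    have := torusChar_mul_neg m y
    rw [fwdDiff, torusChar_add_left]
    linear_combination (-(c (k + m) * torusChar k y)) * this
  simp only [torusKernel, h1]
  have hs' : Summable fun k => c (k + m) * torusChar (k + m) y :=
    (Equiv.addRight m).summable_iff.2 hs
  have hshift : ∑' k, c (k + m) * torusChar (k + m) y = ∑' k, c k * torusChar k y :=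
    (Equiv.addRight m).tsum_eq fun k => c k * torusChar k y
  rw [(hs'.mul_left _).tsum_sub hs, tsum_mul_left, hshift]
  ring

theorem torusKernel_fwdDiff_iter {c : (Fin 3 → ℤ) → ℂ} (hc : c.support.Finite)
    (m : Fin 3 → ℤ) (y : V3) (n : ℕ) :
    torusKernel ((fwdDiff m)^[n] c) y = (torusChar m (-y) - 1) ^ n * torusKernel c y := by
  induction n with
  | zero => simp
  | succ n ih =>
    rw [Function.iterate_succ_apply', torusKernel_fwdDiff (fwdDiff_iter_support_finite hc m n), ih]
    ring

theorem norm_torusChar_sub_one_ge (j : Fin 3) (y : V3) (hy : |y j| ≤ Real.pi) :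
    2 / Real.pi * |y j| ≤ ‖torusChar (Pi.single j 1) (-y) - 1‖ := by
  have h : torusChar (Pi.single j 1) (-y) = Complex.exp (Complex.I * ((-(y j) : ℝ) : ℂ)) := by
    rw [torusChar]
    congr 3
    simp [Pi.single_apply]
  rw [h, Complex.norm_exp_I_mul_ofReal_sub_one, norm_mul, Real.norm_eq_abs, Real.norm_eq_abs,
    abs_of_pos (by norm_num : (0 : ℝ) < 2)]
  have := Real.mul_abs_le_abs_sin (x := -(y j) / 2) (by
    rw [abs_div, abs_neg, abs_of_pos (by norm_num : (0 : ℝ) < 2)]; linarith)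
  rw [abs_div, abs_neg, abs_of_pos (by norm_num : (0 : ℝ) < 2)] at this
  linarith

theorem norm_torusKernel_le {c : (Fin 3 → ℤ) → ℂ} {M B : ℝ} (hM : 0 ≤ M) (hB : 0 ≤ B)
    (hc : ∀ k, c k ≠ 0 → ∀ i, |(k i : ℝ)| ≤ M) (hcB : ∀ k, ‖c k‖ ≤ B) (y : V3) :
    ‖torusKernel c y‖ ≤ (2 * M + 1) ^ 3 * B := by
  set S : Finset (Fin 3 → ℤ) := Fintype.piFinset fun _ => Finset.Icc (-⌊M⌋) ⌊M⌋ with hS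
  have hsub : ∀ k ∉ S, c k * torusChar k y = 0 := by
    intro k hk
    by_contra h
    refine hk (Fintype.mem_piFinset.2 fun i => Finset.mem_Icc.2 ?_)
    have := abs_le.1 (hc k (left_ne_zero_of_mul h) i)
    refine ⟨?_, Int.le_floor.2 this.2⟩
    have : -(k i) ≤ ⌊M⌋ := Int.le_floor.2 (by push_cast; linarith)
    linarith
  rw [torusKernel, tsum_eq_sum hsub]
  have hcard : (S.card : ℝ) ≤ (2 * M + 1) ^ 3 := by
    have h0 : 0 ≤ ⌊M⌋ := Int.floor_nonneg.2 hM
    have h1 : ((⌊M⌋ + 1 - -⌊M⌋).toNat : ℝ) ≤ 2 * M + 1 := by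
      have h2 : (((⌊M⌋ + 1 - -⌊M⌋).toNat : ℤ) : ℝ) = 2 * (⌊M⌋ : ℝ) + 1 := by
        rw [Int.toNat_of_nonneg (by linarith)]
        push_cast
        ring
      have h3 := Int.floor_le M
      rw [← Int.cast_natCast, h2]
      linarith
    rw [hS, Fintype.card_piFinset]
    simp only [Int.card_Icc, Finset.prod_const, Finset.card_univ, Fintype.card_fin]
    push_cast
    gcongr
  calc ‖∑ k ∈ S, c k * torusChar k y‖ ≤ ∑ k ∈ S, B := by
        refine norm_sum_le_of_le _ fun k _ => ?_
        rw [norm_mul, norm_torusChar, mul_one]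
        exact hcB k
    _ = S.card * B := by simp
    _ ≤ _ := by gcongr

theorem norm_fwdDiff_iter_le {E F : Type*} [NormedAddCommGroup E] [NormedSpace ℝ E]
    [NormedAddCommGroup F] [NormedSpace ℝ F] (n : ℕ) {ψ : E → F} (hψ : ContDiff ℝ (⊤ : ℕ∞) ψ)
    {B : ℝ} (hB : ∀ x, ‖iteratedFDeriv ℝ n ψ x‖ ≤ B) (h x : E) :
    ‖(fwdDiff h)^[n] ψ x‖ ≤ B * ‖h‖ ^ n := by
  induction n generalizing ψ B with
  | zero => simpa using hB x
  | succ n ih =>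
    rw [Function.iterate_succ_apply]
    have hshift : ContDiff ℝ (⊤ : ℕ∞) fun x => ψ (x + h) := hψ.comp (contDiff_id.add contDiff_const)
    have := ih (ψ := fwdDiff h ψ) (B := B * ‖h‖) (hshift.sub hψ) fun x => by
      have hd : Differentiable ℝ (iteratedFDeriv ℝ n ψ) :=
        hψ.differentiable_iteratedFDeriv (by exact_mod_cast WithTop.coe_lt_top n)
      have e : iteratedFDeriv ℝ n (fwdDiff h ψ) x
          = iteratedFDeriv ℝ n ψ (x + h) - iteratedFDeriv ℝ n ψ x := by
        have := iteratedFDeriv_sub_apply (i := n) (x := x)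
          ((hshift.of_le (by exact_mod_cast le_top)).contDiffAt)
          ((hψ.of_le (by exact_mod_cast le_top)).contDiffAt)
        rw [iteratedFDeriv_comp_add_right] at this
        exact this
      rw [e]
      have := Convex.norm_image_sub_le_of_norm_fderiv_le (𝕜 := ℝ) (f := iteratedFDeriv ℝ n ψ)
        (s := Set.univ) (x := x) (y := x + h) (C := B) (fun z _ => hd z)
        (fun z _ => by rw [norm_fderiv_iteratedFDeriv]; exact hB z) convex_univ trivial trivial
      simpa using this
    calc _ ≤ _ := this
      _ = _ := by ring

theorem fwdDiff_iter_eq_zero_of_norm_gt {E F : Type*} [NormedAddCommGroup E]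
    [NormedAddCommGroup F] (n : ℕ) {ψ : E → F} {R : ℝ} (hψ : ∀ x, R < ‖x‖ → ψ x = 0) {h : E}
    (hh : ‖h‖ ≤ 1) (x : E) (hx : R + n < ‖x‖) : (fwdDiff h)^[n] ψ x = 0 := by
  induction n generalizing x with
  | zero => exact hψ x (by simpa using hx)
  | succ n ih =>
    push_cast at hx
    rw [Function.iterate_succ_apply', fwdDiff, ih x (by linarith), ih (x + h), sub_self]
    have := norm_sub_le (x + h) h
    rw [add_sub_cancel_right] at this
    linarith

/-- The frequency `k / L`. -/
def scaledFreq (L : ℝ) (k : Fin 3 → ℤ) : V3 := fun i => (k i : ℝ) / L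

theorem fwdDiff_iter_comp_scaledFreq {F : Type*} [AddCommGroup F] (ψ : V3 → F) (L : ℝ)
    (m k : Fin 3 → ℤ) (n : ℕ) :
    (fwdDiff m)^[n] (fun k => ψ (scaledFreq L k)) k
      = (fwdDiff (scaledFreq L m))^[n] ψ (scaledFreq L k) := by
  have hadd : ∀ k m, scaledFreq L (k + m) = scaledFreq L k + scaledFreq L m := fun k m => by
    ext i
    simp [scaledFreq, add_div]
  induction n generalizing k with
  | zero => rfl
  | succ n ih => simp only [Function.iterate_succ_apply', fwdDiff, ih, hadd]

theorem abs_le_of_norm_scaledFreq_le {L : ℝ} (hL : 0 < L) {k : Fin 3 → ℤ} {R : ℝ}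
    (h : ‖scaledFreq L k‖ ≤ R) (i : Fin 3) : |(k i : ℝ)| ≤ R * L := by
  have := (norm_le_pi_norm (scaledFreq L k) i).trans h
  rwa [scaledFreq, Real.norm_eq_abs, abs_div, abs_of_pos hL, div_le_iff₀ hL] at this

theorem finite_of_forall_abs_le {s : Set (Fin 3 → ℤ)} {M : ℝ}
    (h : ∀ k ∈ s, ∀ i, |(k i : ℝ)| ≤ M) : s.Finite := by
  refine (Set.Finite.pi' fun _ : Fin 3 => Set.finite_Icc (-⌊M⌋) ⌊M⌋).subset fun k hk i => ?_
  have := abs_le.1 (h k hk i)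
  have h2 : -(k i) ≤ ⌊M⌋ := Int.le_floor.2 (by push_cast; linarith)
  exact ⟨by linarith, Int.le_floor.2 this.2⟩

theorem HasCompactSupport.exists_eq_zero_of_norm_gt {E F : Type*} [NormedAddCommGroup E]
    [Zero F] {ψ : E → F} (hψ : HasCompactSupport ψ) :
    ∃ R : ℝ, 0 ≤ R ∧ ∀ x, R < ‖x‖ → ψ x = 0 := by
  obtain ⟨R, hR⟩ := hψ.isBounded.subset_closedBall (0 : E)
  refine ⟨max R 0, le_max_right _ _, fun x hx => ?_⟩
  by_contra h
  have := hR (subset_tsupport ψ h)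
  rw [mem_closedBall_zero_iff] at this
  linarith [le_max_left R 0]

theorem support_comp_scaledFreq_finite {ψ : V3 → ℂ} (hψ : HasCompactSupport ψ) {L : ℝ}
    (hL : 0 < L) : (fun k => ψ (scaledFreq L k)).support.Finite := by
  obtain ⟨R, -, hR⟩ := hψ.exists_eq_zero_of_norm_gt
  refine finite_of_forall_abs_le (M := R * L) fun k hk i => ?_
  exact abs_le_of_norm_scaledFreq_le hL (not_lt.1 fun h => hk (hR _ h)) i

theorem exists_pow_mul_norm_torusKernel_le {ψ : V3 → ℂ} (hψ : ContDiff ℝ (⊤ : ℕ∞) ψ)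
    (hs : HasCompactSupport ψ) (n : ℕ) :
    ∃ C : ℝ, 0 ≤ C ∧ ∀ L : ℝ, 1 ≤ L → ∀ y : V3, ‖y‖ ≤ Real.pi →
      (L * ‖y‖) ^ n * ‖torusKernel (fun k => ψ (scaledFreq L k)) y‖ ≤ C * L ^ 3 := by
  obtain ⟨R, hR0, hR⟩ := hs.exists_eq_zero_of_norm_gt
  obtain ⟨B, hB⟩ := (hs.iteratedFDeriv (𝕜 := ℝ) n).exists_bound_of_continuous
    (hψ.continuous_iteratedFDeriv (m := n) (by exact_mod_cast le_top))
  have hB0 : 0 ≤ B := (norm_nonneg _).trans (hB 0)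
  refine ⟨(Real.pi / 2) ^ n * ((2 * (R + n) + 1) ^ 3 * B), by positivity, fun L hL y hy => ?_⟩
  have hL0 : 0 < L := by linarith
  obtain ⟨j, hj⟩ := Finite.exists_max fun i => ‖y i‖
  have hyj : ‖y‖ = |y j| :=
    le_antisymm ((pi_norm_le_iff_of_nonneg (norm_nonneg _)).2 hj) (norm_le_pi_norm y j)
  set c : (Fin 3 → ℤ) → ℂ := fun k => ψ (scaledFreq L k)
  have hc : c.support.Finite := support_comp_scaledFreq_finite hs hL0
  set m : Fin 3 → ℤ := Pi.single j 1 with hm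
  have hh : ‖scaledFreq L m‖ ≤ L⁻¹ := by
    refine (pi_norm_le_iff_of_nonneg (by positivity)).2 fun i => ?_
    rcases eq_or_ne i j with rfl | hij
    · simp [scaledFreq, hm, abs_of_pos hL0]
    · simp [scaledFreq, hm, Pi.single_eq_of_ne hij, hL0.le]
  have hh1 : ‖scaledFreq L m‖ ≤ 1 := hh.trans (inv_le_one_of_one_le₀ hL)
  have hK : ‖torusKernel ((fwdDiff m)^[n] c) y‖
      ≤ (2 * ((R + n) * L) + 1) ^ 3 * (B * L⁻¹ ^ n) := by
    refine norm_torusKernel_le (by positivity) (by positivity) (fun k hk => ?_) (fun k => ?_) y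
    · rw [fwdDiff_iter_comp_scaledFreq] at hk
      exact abs_le_of_norm_scaledFreq_le hL0
        (not_lt.1 fun h => hk (fwdDiff_iter_eq_zero_of_norm_gt n hR hh1 _ h))
    · rw [fwdDiff_iter_comp_scaledFreq]
      refine (norm_fwdDiff_iter_le n hψ hB _ _).trans ?_
      gcongr
  rw [torusKernel_fwdDiff_iter hc, norm_mul, norm_pow] at hK
  have h1 := norm_torusChar_sub_one_ge j y (hyj ▸ hy)
  rw [← hyj] at h1
  have hpi := Real.pi_pos
  calc (L * ‖y‖) ^ n * ‖torusKernel c y‖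
      = (Real.pi / 2) ^ n * L ^ n * ((2 / Real.pi * ‖y‖) ^ n * ‖torusKernel c y‖) := by
        rw [← mul_assoc, ← mul_pow, ← mul_pow]
        congr 2
        field_simp
    _ ≤ (Real.pi / 2) ^ n * L ^ n * ((2 * ((R + n) * L) + 1) ^ 3 * (B * L⁻¹ ^ n)) := by
        refine mul_le_mul_of_nonneg_left (le_trans ?_ hK) (by positivity)
        gcongr
    _ = (Real.pi / 2) ^ n * (2 * ((R + n) * L) + 1) ^ 3 * B := by
        rw [inv_pow]
        field_simp
    _ ≤ (Real.pi / 2) ^ n * ((2 * (R + n) + 1) * L) ^ 3 * B := by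
        gcongr
        nlinarith
    _ = _ := by ring

/-- The Fourier multiplier on the torus with symbol `ψ (· / L)`. -/
def fourierMul (ψ : V3 → ℂ) (L : ℝ) (H : V3 → ℝ) (x : V3) : ℂ :=
  ∑' k : Fin 3 → ℤ, ψ (scaledFreq L k) * fcoef H k * torusChar k x

theorem Pse_eq_re_fourierMul (φ : V3 → ℝ) (S : ℝ) (H : V3 → ℝ) (x : V3) :
    Pse φ S H x = (fourierMul (fun ξ => (φ ξ : ℂ)) ((2 : ℝ) ^ Jof S) H x).re := rfl

theorem exists_finset_fourierMul_eq {ψ : V3 → ℂ} (hψ : HasCompactSupport ψ) {L : ℝ}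
    (hL : 0 < L) : ∃ S : Finset (Fin 3 → ℤ), (∀ k ∉ S, ψ (scaledFreq L k) = 0) ∧
      ∀ H, fourierMul ψ L H
        = fun x => ∑ k ∈ S, ψ (scaledFreq L k) * fcoef H k * torusChar k x := by
  have hf := support_comp_scaledFreq_finite hψ hL
  have h0 : ∀ k ∉ hf.toFinset, ψ (scaledFreq L k) = 0 := fun k hk => by
    simpa using hk
  exact ⟨hf.toFinset, h0, fun H => funext fun x => tsum_eq_sum fun k hk => by simp [h0 k hk]⟩

theorem fcoef_eq (H : V3 → ℝ) (k : Fin 3 → ℤ) :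
    fcoef H k = (((2 * Real.pi) ^ (3 : ℕ))⁻¹ : ℝ) • ∫ x in T3, (H x : ℂ) * torusChar k (-x) := by
  simp only [fcoef, torusChar_neg]

theorem PerSpace.torusChar_neg (k : Fin 3 → ℤ) : PerSpace fun x => torusChar k (-x) := by
  intro x n
  dsimp only
  rw [← torusChar_period k (-x) (-n)]
  congr 1
  ext i
  simp
  ring

theorem continuous_torusChar (k : Fin 3 → ℤ) : Continuous (torusChar k) :=
  (contDiff_torusChar k).continuous

theorem Continuous.integrableOn_T3 {E : Type*} [NormedAddCommGroup E] {f : V3 → E}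
    (hf : Continuous f) : IntegrableOn f T3 :=
  hf.continuousOn.integrableOn_compact isCompact_Icc

theorem fcoef_mul_torusChar {H : V3 → ℝ} (hp : PerSpace H) (k : Fin 3 → ℤ) (x : V3) :
    fcoef H k * torusChar k x
      = (((2 * Real.pi) ^ (3 : ℕ))⁻¹ : ℝ) • ∫ y in T3, (H (x + y) : ℂ) * torusChar k (-y) := by
  have hper : PerSpace fun x => (H x : ℂ) * torusChar k (-x) := fun x n => by
    have h2 := PerSpace.torusChar_neg k x n
    dsimp only at h2 ⊢
    rw [hp, h2]
  rw [fcoef_eq, hper.setIntegral_T3_add x, smul_mul_assoc, ← integral_mul_const]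
  congr 2
  ext y
  rw [mul_assoc, mul_comm (torusChar k (-(x + y))), ← torusChar_add]
  congr 2
  abel

theorem fourierMul_eq_integral {ψ : V3 → ℂ} (hψ : HasCompactSupport ψ) {L : ℝ} (hL : 0 < L)
    {H : V3 → ℝ} (hc : Continuous H) (hp : PerSpace H) (x : V3) :
    fourierMul ψ L H x = (((2 * Real.pi) ^ (3 : ℕ))⁻¹ : ℝ) •
      ∫ y in T3, (H (x + y) : ℂ) * torusKernel (fun k => ψ (scaledFreq L k)) (-y) := by
  obtain ⟨S, hS, hQ⟩ := exists_finset_fourierMul_eq hψ hL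
  have hK : ∀ y, torusKernel (fun k => ψ (scaledFreq L k)) (-y)
      = ∑ k ∈ S, ψ (scaledFreq L k) * torusChar k (-y) := fun y =>
    tsum_eq_sum fun k hk => by simp [hS k hk]
  simp only [hQ, hK, mul_assoc, fcoef_mul_torusChar hp, Finset.mul_sum]
  rw [integral_finsetSum, Finset.smul_sum]
  · refine Finset.sum_congr rfl fun k _ => ?_
    rw [mul_smul_comm, ← integral_const_mul]
    congr 2
    ext y
    ring
  · intro k _
    have := continuous_torusChar k
    exact Continuous.integrableOn_T3 (by fun_prop)

theorem norm_le_pi_of_mem_T3 {y : V3} (hy : y ∈ T3) : ‖y‖ ≤ Real.pi :=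
  (pi_norm_le_iff_of_nonneg Real.pi_pos.le).2 fun i => abs_le.2 ⟨hy.1 i, hy.2 i⟩

theorem exists_norm_torusKernel_le {ψ : V3 → ℂ} (hψ : ContDiff ℝ (⊤ : ℕ∞) ψ)
    (hs : HasCompactSupport ψ) :
    ∃ C : ℝ, 0 ≤ C ∧ ∀ L : ℝ, 1 ≤ L → ∀ y : V3, ‖y‖ ≤ Real.pi → ∀ a : ℕ, a ≤ 2 →
      ‖y‖ ^ a * ‖torusKernel (fun k => ψ (scaledFreq L k)) y‖
        ≤ C * L⁻¹ ^ a * (L ^ 3 * (1 + ‖L • y‖) ^ (-(4 : ℝ))) := by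
  obtain ⟨C₀, hC₀, h₀⟩ := exists_pow_mul_norm_torusKernel_le hψ hs 0
  obtain ⟨C₁, hC₁, h₁⟩ := exists_pow_mul_norm_torusKernel_le hψ hs 6
  refine ⟨32 * (C₀ + C₁), by positivity, fun L hL y hy a ha => ?_⟩
  have hL0 : 0 < L := by linarith
  have k₀ := h₀ L hL y hy
  have k₁ := h₁ L hL y hy
  rw [norm_smul, Real.norm_eq_abs, abs_of_pos hL0]
  set s := L * ‖y‖ with hs
  have hs0 : 0 ≤ s := by positivity
  set K := ‖torusKernel (fun k => ψ (scaledFreq L k)) y‖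
  have hK : 0 ≤ K := norm_nonneg _
  have e1 : (1 + s) ^ (-(4 : ℝ)) = ((1 + s) ^ 4)⁻¹ := by
    rw [Real.rpow_neg (by positivity)]
    norm_cast
  have e2 : ‖y‖ ^ a = L⁻¹ ^ a * s ^ a := by
    rw [hs, ← mul_pow]
    field_simp
  have h6 : (1 + s) ^ 6 ≤ 32 * (1 + s ^ 6) := by
    have := add_pow_le zero_le_one hs0 6
    norm_num at this
    linarith
  have hsa : s ^ a ≤ (1 + s) ^ 2 := calc
    s ^ a ≤ (1 + s) ^ a := by gcongr; linarith
    _ ≤ (1 + s) ^ 2 := pow_le_pow_right₀ (by linarith) ha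
  rw [e1, e2, ← mul_assoc, ← div_eq_mul_inv, le_div_iff₀ (by positivity)]
  calc L⁻¹ ^ a * s ^ a * K * (1 + s) ^ 4
      ≤ L⁻¹ ^ a * (1 + s) ^ 2 * K * (1 + s) ^ 4 := by gcongr
    _ = L⁻¹ ^ a * ((1 + s) ^ 6 * K) := by ring
    _ ≤ L⁻¹ ^ a * (32 * (1 + s ^ 6) * K) := by gcongr
    _ = L⁻¹ ^ a * (32 * (s ^ 0 * K + s ^ 6 * K)) := by ring
    _ ≤ L⁻¹ ^ a * (32 * (C₀ * L ^ 3 + C₁ * L ^ 3)) := by gcongr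
    _ = _ := by ring

theorem exists_norm_fourierMul_le {ψ : V3 → ℂ} (hψ : ContDiff ℝ (⊤ : ℕ∞) ψ)
    (hs : HasCompactSupport ψ) :
    ∃ C : ℝ, 0 ≤ C ∧ ∀ L : ℝ, 1 ≤ L → ∀ H : V3 → ℝ, Continuous H → PerSpace H →
      ∀ (x : V3) (M : ℝ), 0 ≤ M → ∀ a : ℕ, a ≤ 2 → (∀ y, |H (x + y)| ≤ M * ‖y‖ ^ a) →
        ‖fourierMul ψ L H x‖ ≤ C * M * L⁻¹ ^ a := by
  obtain ⟨C, hC, hK⟩ := exists_norm_torusKernel_le hψ hs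
  have hint : Integrable (fun y : V3 => (1 + ‖y‖) ^ (-(4 : ℝ))) :=
    integrable_one_add_norm (by rw [Module.finrank_fin_fun]; norm_num)
  set I := ∫ y : V3, (1 + ‖y‖) ^ (-(4 : ℝ))
  have hI : 0 ≤ I := integral_nonneg fun y => by positivity
  refine ⟨((2 * Real.pi) ^ 3)⁻¹ * (C * I), by positivity, fun L hL H hc hp x M hM a ha hH => ?_⟩
  have hL0 : 0 < L := by linarith
  have hintL : Integrable (fun y : V3 => (1 + ‖L • y‖) ^ (-(4 : ℝ))) :=
    hint.comp_smul hL0.ne'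
  have hIL : ∫ y : V3, L ^ 3 * (1 + ‖L • y‖) ^ (-(4 : ℝ)) = I := by
    rw [integral_const_mul,
      Measure.integral_comp_smul volume (fun y : V3 => (1 + ‖y‖) ^ (-(4 : ℝ))) L,
      Module.finrank_fin_fun, abs_of_pos (by positivity), smul_eq_mul, ← mul_assoc,
      mul_inv_cancel₀ (by positivity), one_mul]
  rw [fourierMul_eq_integral hs hL0 hc hp, norm_smul, Real.norm_of_nonneg (by positivity)]
  have hle : ‖∫ y in T3, (H (x + y) : ℂ) * torusKernel (fun k => ψ (scaledFreq L k)) (-y)‖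
      ≤ ∫ y in T3, C * M * L⁻¹ ^ a * (L ^ 3 * (1 + ‖L • y‖) ^ (-(4 : ℝ))) := by
    refine norm_integral_le_of_norm_le ((hintL.const_mul _).const_mul _).integrableOn ?_
    refine (ae_restrict_iff' measurableSet_Icc).2 (Filter.Eventually.of_forall fun y hy => ?_)
    have h1 := hK L hL (-y) (by rw [norm_neg]; exact norm_le_pi_of_mem_T3 hy) a ha
    rw [smul_neg, norm_neg, norm_neg] at h1
    rw [norm_mul, Complex.norm_real, Real.norm_eq_abs]
    calc _ ≤ M * ‖y‖ ^ a * ‖torusKernel (fun k => ψ (scaledFreq L k)) (-y)‖ := by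
          gcongr
          exact hH y
      _ = M * (‖y‖ ^ a * ‖torusKernel (fun k => ψ (scaledFreq L k)) (-y)‖) := by ring
      _ ≤ _ := mul_le_mul_of_nonneg_left h1 hM
      _ = _ := by ring
  have hle2 : ∫ y in T3, L ^ 3 * (1 + ‖L • y‖) ^ (-(4 : ℝ)) ≤ I := by
    rw [← hIL]
    exact setIntegral_le_integral (hintL.const_mul _)
      (Filter.Eventually.of_forall fun y => by positivity)
  rw [integral_const_mul] at hle
  calc _ ≤ ((2 * Real.pi) ^ 3)⁻¹ * (C * M * L⁻¹ ^ a * I) := by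
        refine mul_le_mul_of_nonneg_left (hle.trans ?_) (by positivity)
        gcongr
    _ = _ := by ring

theorem contDiff_fourierMul {ψ : V3 → ℂ} (hψ : HasCompactSupport ψ) {L : ℝ} (hL : 0 < L)
    (H : V3 → ℝ) : ContDiff ℝ (⊤ : ℕ∞) (fourierMul ψ L H) := by
  obtain ⟨S, -, hQ⟩ := exists_finset_fourierMul_eq hψ hL
  rw [hQ]
  exact ContDiff.sum fun k _ => contDiff_const.mul (contDiff_torusChar k)

/-- The symbol `ξ ↦ i ξ_j ψ(ξ)`. -/
def derivSymbol (j : Fin 3) (ψ : V3 → ℂ) (ξ : V3) : ℂ := Complex.I * (ξ j : ℂ) * ψ ξ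

theorem contDiff_derivSymbol (j : Fin 3) {ψ : V3 → ℂ} (hψ : ContDiff ℝ (⊤ : ℕ∞) ψ) :
    ContDiff ℝ (⊤ : ℕ∞) (derivSymbol j ψ) :=
  (contDiff_const.mul (Complex.ofRealCLM.contDiff.comp (contDiff_apply ℝ ℝ j))).mul hψ

theorem hasCompactSupport_derivSymbol (j : Fin 3) {ψ : V3 → ℂ} (hψ : HasCompactSupport ψ) :
    HasCompactSupport (derivSymbol j ψ) := hψ.mul_left

theorem hasFDerivAt_fourierMul {ψ : V3 → ℂ} (hψ : HasCompactSupport ψ) {L : ℝ} (hL : 0 < L)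
    (H : V3 → ℝ) (x : V3) :
    HasFDerivAt (fourierMul ψ L H)
      (∑ j, (ContinuousLinearMap.proj (R := ℝ) (φ := fun _ : Fin 3 => ℝ) j).smulRight
        ((L : ℂ) * fourierMul (derivSymbol j ψ) L H x)) x := by
  obtain ⟨S, hS, hQ⟩ := exists_finset_fourierMul_eq hψ hL
  have hQ' : ∀ j, fourierMul (derivSymbol j ψ) L H x
      = ∑ k ∈ S, derivSymbol j ψ (scaledFreq L k) * fcoef H k * torusChar k x := fun j =>
    tsum_eq_sum fun k hk => by simp [derivSymbol, hS k hk]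
  rw [hQ]
  refine (HasFDerivAt.fun_sum fun k _ => (hasFDerivAt_torusChar k x).const_mul _).congr_fderiv ?_
  have hLc : (L : ℂ) ≠ 0 := by exact_mod_cast hL.ne'
  ext w
  simp only [sum_apply, smul_apply,
    ContinuousLinearMap.smulRight_apply, ContinuousLinearMap.proj_apply, hQ', Finset.mul_sum,
    Finset.smul_sum, smul_eq_mul, Complex.real_smul]
  rw [Finset.sum_comm]
  refine Finset.sum_congr rfl fun j _ => Finset.sum_congr rfl fun k _ => ?_
  simp only [derivSymbol, scaledFreq]
  push_cast
  field_simp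

theorem exists_norm_iteratedFDeriv_fourierMul_le (n : ℕ) {ψ : V3 → ℂ}
    (hψ : ContDiff ℝ (⊤ : ℕ∞) ψ) (hs : HasCompactSupport ψ) :
    ∃ C : ℝ, 0 ≤ C ∧ ∀ L : ℝ, 1 ≤ L → ∀ H : V3 → ℝ, Continuous H → PerSpace H →
      ∀ (x : V3) (M : ℝ), 0 ≤ M → ∀ a : ℕ, a ≤ 2 → (∀ y, |H (x + y)| ≤ M * ‖y‖ ^ a) →
        ‖iteratedFDeriv ℝ n (fourierMul ψ L H) x‖ ≤ C * M * L⁻¹ ^ a * L ^ n := by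
  induction n generalizing ψ with
  | zero => simpa using exists_norm_fourierMul_le hψ hs
  | succ n ih =>
    choose C hC hB using fun j =>
      ih (contDiff_derivSymbol j hψ) (hasCompactSupport_derivSymbol j hs)
    set T : Fin 3 → ℂ →L[ℝ] V3 →L[ℝ] ℂ := fun j => ContinuousLinearMap.smulRightL ℝ V3 ℂ
      (ContinuousLinearMap.proj (R := ℝ) (φ := fun _ : Fin 3 => ℝ) j) with hT
    refine ⟨∑ j, ‖T j‖ * C j, Finset.sum_nonneg fun j _ => mul_nonneg (ContinuousLinearMap.opNorm_nonneg _) (hC j),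
      fun L hL H hc hp x M hM a ha hH => ?_⟩
    have hL0 : 0 < L := by linarith
    have hsm := fun j => contDiff_fourierMul (hasCompactSupport_derivSymbol j hs) hL0 H
    have hfd : fderiv ℝ (fourierMul ψ L H)
        = fun x => ∑ j, ((L • T j) ∘ fourierMul (derivSymbol j ψ) L H) x := by
      ext1 x
      rw [(hasFDerivAt_fourierMul hs hL0 H x).fderiv]
      refine Finset.sum_congr rfl fun j _ => ?_
      ext w
      simp [hT]
      ring
    rw [← norm_iteratedFDeriv_fderiv, hfd, iteratedFDeriv_fun_sum_apply, Finset.sum_mul,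
      Finset.sum_mul, Finset.sum_mul]
    · refine norm_sum_le_of_le _ fun j _ => ?_
      calc _ ≤ ‖L • T j‖ * ‖iteratedFDeriv ℝ n (fourierMul (derivSymbol j ψ) L H) x‖ :=
            ContinuousLinearMap.norm_iteratedFDeriv_comp_left _ (hsm j).contDiffAt
              (by exact_mod_cast le_top)
        _ ≤ L * ‖T j‖ * (C j * M * L⁻¹ ^ a * L ^ n) := by
            have h1 := ContinuousLinearMap.opNorm_smul_le L (T j)
            rw [Real.norm_of_nonneg hL0.le] at h1
            exact mul_le_mul h1 (hB j L hL H hc hp x M hM a ha hH) (norm_nonneg _)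
              (mul_nonneg hL0.le (ContinuousLinearMap.opNorm_nonneg _))
        _ = _ := by ring
    · intro j _
      exact (((L • T j).contDiff.comp (hsm j)).of_le (by exact_mod_cast le_top)).contDiffAt

theorem PerSpace.integral_fderiv_eq_zero {F : V3 → ℂ} (hp : PerSpace F)
    (hF : ContDiff ℝ 1 F) (i : Fin 3) : ∫ x in T3, fderiv ℝ F x (e3 i) = 0 := by
  have hsum : ∀ x, ∑ j, ((ContinuousLinearMap.single ℝ (fun _ : Fin 3 => ℂ) i).comp
      (fderiv ℝ F x)) (Pi.single j 1) j = fderiv ℝ F x (e3 i) := fun x => by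
    rw [Finset.sum_eq_single i]
    · simp [e3]
    · intro j _ hj
      simp [hj]
    · simp
  have hcont : Continuous fun x => fderiv ℝ F x (e3 i) :=
    (hF.continuous_fderiv one_ne_zero).clm_apply continuous_const
  have h := integral_divergence_of_hasFDerivAt_off_countable (E := ℂ)
    (fun _ : Fin 3 => -Real.pi) (fun _ => Real.pi)
    (fun _ => by simp only; linarith [Real.pi_pos])
    (fun x => (ContinuousLinearMap.single ℝ (fun _ : Fin 3 => ℂ) i) (F x))
    (fun x => (ContinuousLinearMap.single ℝ (fun _ : Fin 3 => ℂ) i).comp (fderiv ℝ F x)) ∅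
    Set.countable_empty
    ((ContinuousLinearMap.continuous _).comp hF.continuous).continuousOn
    (fun x _ => (ContinuousLinearMap.hasFDerivAt _).comp x
      ((hF.differentiable one_ne_zero) x).hasFDerivAt)
    (by simp only [hsum]; exact hcont.integrableOn_T3)
  simp only [hsum] at h
  rw [T3, h]
  refine Finset.sum_eq_zero fun j _ => ?_
  rcases eq_or_ne j i with rfl | hj
  · have hper : ∀ x : Fin 2 → ℝ, F (j.insertNth Real.pi x) = F (j.insertNth (-Real.pi) x) := by
      intro x
      rw [← hp (j.insertNth (-Real.pi) x) (Pi.single j 1)]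
      congr 1
      ext l
      rcases Fin.eq_self_or_eq_succAbove j l with rfl | ⟨l, rfl⟩
      · simp
        ring
      · simp
    simp [hper]
  · simp [hj]

/-- The partial derivative of a function on `ℝ³` in the `i`-th direction. -/
def partialX (i : Fin 3) (F : V3 → ℝ) (x : V3) : ℝ := fderiv ℝ F x (e3 i)

theorem contDiff_partialX {F : V3 → ℝ} (hF : ContDiff ℝ (⊤ : ℕ∞) F) (i : Fin 3) :
    ContDiff ℝ (⊤ : ℕ∞) (partialX i F) :=
  (hF.fderiv_right (m := (⊤ : ℕ∞)) (by exact_mod_cast le_top)).clm_apply contDiff_const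

theorem PerSpace.partialX {F : V3 → ℝ} (hp : PerSpace F) (i : Fin 3) :
    PerSpace (partialX i F) := by
  intro x n
  have hF : (fun y => F (y + fun i => 2 * Real.pi * n i)) = F := funext fun y => hp y n
  have := fderiv_comp_add_right (𝕜 := ℝ) (f := F) (x := x) (fun i => 2 * Real.pi * (n i : ℝ))
  rw [hF] at this
  rw [_root_.partialX, _root_.partialX, this]
  rfl

theorem fcoef_partialX {H : V3 → ℝ} (hH : ContDiff ℝ (⊤ : ℕ∞) H) (hp : PerSpace H) (i : Fin 3)
    (k : Fin 3 → ℤ) : fcoef (partialX i H) k = Complex.I * (k i : ℂ) * fcoef H k := by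
  have hc := continuous_torusChar k
  have hF : ContDiff ℝ (⊤ : ℕ∞) fun x => (H x : ℂ) * torusChar k (-x) :=
    (Complex.ofRealCLM.contDiff.comp hH).mul ((contDiff_torusChar k).comp contDiff_neg)
  have hper : PerSpace fun x => (H x : ℂ) * torusChar k (-x) := fun x n => by
    have h2 := PerSpace.torusChar_neg k x n
    dsimp only at h2 ⊢
    rw [hp, h2]
  have hd : ∀ x, fderiv ℝ (fun x => (H x : ℂ) * torusChar k (-x)) x (e3 i)
      = (partialX i H x : ℂ) * torusChar k (-x)
        - Complex.I * (k i : ℂ) * ((H x : ℂ) * torusChar k (-x)) := by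
    intro x
    have h1 := Complex.ofRealCLM.hasFDerivAt.comp x
      ((hH.differentiable (by simp)) x).hasFDerivAt
    have h2 := (hasFDerivAt_torusChar k (-x)).comp x (hasFDerivAt_id x).neg
    have h3 := (h1.mul h2).fderiv
    simp only [Function.comp_def] at h3
    have h4 : (fun x => (H x : ℂ) * torusChar k (-x))
        = (fun y => Complex.ofRealCLM (H y)) * fun y => torusChar k (-y) := rfl
    rw [h4, h3]
    simp [e3, Pi.single_apply, partialX]
    ring
  have h0 := hper.integral_fderiv_eq_zero (hF.of_le (by exact_mod_cast le_top)) i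
  simp only [hd] at h0
  have hpc := (contDiff_partialX hH i).continuous
  have hHc := hH.continuous
  rw [integral_sub (Continuous.integrableOn_T3 (by fun_prop))
    (Continuous.integrableOn_T3 (by fun_prop)), integral_const_mul, sub_eq_zero] at h0
  rw [fcoef_eq, fcoef_eq, h0, mul_smul_comm]

theorem fcoef_add {H₁ H₂ : V3 → ℝ} (h₁ : Continuous H₁) (h₂ : Continuous H₂)
    (k : Fin 3 → ℤ) : fcoef (fun x => H₁ x + H₂ x) k = fcoef H₁ k + fcoef H₂ k := by
  have hc := continuous_torusChar k
  rw [fcoef_eq, fcoef_eq, fcoef_eq, ← smul_add,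
    ← integral_add (Continuous.integrableOn_T3 (by fun_prop))
      (Continuous.integrableOn_T3 (by fun_prop))]
  congr 2
  ext x
  push_cast
  ring

theorem fcoef_const_mul (c : ℝ) (H : V3 → ℝ) (k : Fin 3 → ℤ) :
    fcoef (fun x => c * H x) k = c * fcoef H k := by
  rw [fcoef_eq, fcoef_eq, mul_smul_comm, ← integral_const_mul]
  congr 2
  ext x
  push_cast
  ring

theorem IsCutoff.contDiff_ofReal {φ : V3 → ℝ} (hφ : IsCutoff φ) :
    ContDiff ℝ (⊤ : ℕ∞) fun ξ => (φ ξ : ℂ) := Complex.ofRealCLM.contDiff.comp hφ.1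

theorem IsCutoff.hasCompactSupport_ofReal {φ : V3 → ℝ} (hφ : IsCutoff φ) :
    HasCompactSupport fun ξ => (φ ξ : ℂ) := by
  refine HasCompactSupport.of_support_subset_isCompact (isCompact_closedBall (0 : V3) 2) ?_
  intro ξ hξ
  rw [mem_closedBall_zero_iff]
  refine (pi_norm_le_iff_of_nonneg zero_le_two).2 fun i => ?_
  by_contra! h
  refine hξ ?_
  have : φ ξ = 0 := by
    refine hφ.2.2.2 ξ (h.le.trans ?_)
    rw [Real.norm_eq_abs, enorm3]
    refine Real.abs_le_sqrt ?_
    exact Finset.single_le_sum (f := fun i => ξ i ^ 2) (fun i _ => sq_nonneg _)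
      (Finset.mem_univ i)
  simp [this]

theorem two_zpow_Jof_pos (S : ℝ) : (0 : ℝ) < 2 ^ Jof S := by positivity

theorem IsCutoff.contDiff_Pse {φ : V3 → ℝ} (hφ : IsCutoff φ) (S : ℝ) (H : V3 → ℝ) :
    ContDiff ℝ (⊤ : ℕ∞) (Pse φ S H) :=
  Complex.reCLM.contDiff.comp
    (contDiff_fourierMul hφ.hasCompactSupport_ofReal (two_zpow_Jof_pos S) H)

theorem IsCutoff.Pse_add {φ : V3 → ℝ} (hφ : IsCutoff φ) (S : ℝ) {H₁ H₂ : V3 → ℝ}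
    (h₁ : Continuous H₁) (h₂ : Continuous H₂) (x : V3) :
    Pse φ S (fun y => H₁ y + H₂ y) x = Pse φ S H₁ x + Pse φ S H₂ x := by
  obtain ⟨s, -, hQ⟩ :=
    exists_finset_fourierMul_eq hφ.hasCompactSupport_ofReal (two_zpow_Jof_pos S)
  simp only [Pse_eq_re_fourierMul, hQ, fcoef_add h₁ h₂, ← Complex.add_re, ← Finset.sum_add_distrib]
  congr 2
  ext k
  ring

theorem Pse_const_mul (φ : V3 → ℝ) (S c : ℝ) (H : V3 → ℝ) (x : V3) :
    Pse φ S (fun y => c * H y) x = c * Pse φ S H x := by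
  simp only [Pse_eq_re_fourierMul, fourierMul, fcoef_const_mul, ← Complex.re_ofReal_mul,
    ← tsum_mul_left]
  congr 2
  ext k
  ring

theorem IsCutoff.partialX_Pse {φ : V3 → ℝ} (hφ : IsCutoff φ) (S : ℝ) {H : V3 → ℝ}
    (hH : ContDiff ℝ (⊤ : ℕ∞) H) (hp : PerSpace H) (i : Fin 3) (x : V3) :
    partialX i (Pse φ S H) x = Pse φ S (partialX i H) x := by
  have hL := two_zpow_Jof_pos S
  have h : HasFDerivAt (Pse φ S H) _ x := Complex.reCLM.hasFDerivAt.comp x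
    (hasFDerivAt_fourierMul hφ.hasCompactSupport_ofReal hL H x)
  rw [partialX, h.fderiv, Pse_eq_re_fourierMul]
  simp only [e3, ContinuousLinearMap.comp_apply, sum_apply,
    ContinuousLinearMap.smulRight_apply, ContinuousLinearMap.proj_apply, Pi.single_apply,
    ite_smul, one_smul, zero_smul, Finset.sum_ite_eq', Finset.mem_univ, if_true,
    Complex.reCLM_apply]
  congr 1
  rw [fourierMul, fourierMul, ← tsum_mul_left]
  refine tsum_congr fun k => ?_
  have hLc : ((2 : ℂ) ^ Jof S) ≠ 0 := zpow_ne_zero _ two_ne_zero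
  rw [fcoef_partialX hH hp, derivSymbol, scaledFreq]
  push_cast
  field_simp

/-- The commutator `[u·∇, P_{≤S}] F` at a fixed time. -/
def advComm (φ : V3 → ℝ) (S : ℝ) (u : V3 → V3) (F : V3 → ℝ) (x : V3) : ℝ :=
  (∑ i, u x i * partialX i (Pse φ S F) x) - Pse φ S (fun y => ∑ i, u y i * partialX i F y) x

theorem partialX_mul {F G : V3 → ℝ} (hF : ContDiff ℝ (⊤ : ℕ∞) F) (hG : ContDiff ℝ (⊤ : ℕ∞) G)
    (i : Fin 3) (x : V3) :
    partialX i (fun y => F y * G y) x = partialX i F x * G x + F x * partialX i G x := by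
  simp only [partialX]
  rw [fderiv_fun_mul (hF.differentiable (by simp) x) (hG.differentiable (by simp) x)]
  simp
  ring

theorem partialX_sub_const (F : V3 → ℝ) (c : ℝ) (i : Fin 3) (x : V3) :
    partialX i (fun y => F y - c) x = partialX i F x := by
  simp only [partialX, fderiv_sub_const]

theorem PerSpace.mul {F G : V3 → ℝ} (hF : PerSpace F) (hG : PerSpace G) :
    PerSpace fun y => F y * G y := fun x n => by
  dsimp only
  rw [hF, hG]

theorem PerSpace.sub_const {F : V3 → ℝ} (hF : PerSpace F) (c : ℝ) :
    PerSpace fun y => F y - c := fun x n => by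
  dsimp only
  rw [hF]

theorem IsCutoff.advComm_sub_const {φ : V3 → ℝ} (hφ : IsCutoff φ) (S : ℝ) {u : V3 → V3}
    (hu : ContDiff ℝ (⊤ : ℕ∞) u) {F : V3 → ℝ} (hF : ContDiff ℝ (⊤ : ℕ∞) F) (hp : PerSpace F)
    (c : V3) (x : V3) :
    advComm φ S (fun y => u y - c) F x = advComm φ S u F x := by
  have huc : ∀ i, Continuous fun y => u y i := fun i => (continuous_apply i).comp hu.continuous
  have hd : ∀ i, Continuous (partialX i F) := fun i => (contDiff_partialX hF i).continuous
  have h : (fun y => ∑ i, u y i * partialX i F y) = fun y =>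
      (∑ i, (u y - c) i * partialX i F y)
        + (c 0 * partialX 0 F y + (c 1 * partialX 1 F y + c 2 * partialX 2 F y)) := by
    ext y
    simp only [Fin.sum_univ_three, Pi.sub_apply]
    ring
  have h0 := hd 0
  have h1 := hd 1
  have h2 := hd 2
  have hsum : Continuous fun y => ∑ i, (u y - c) i * partialX i F y :=
    continuous_finsetSum _ fun i _ => ((huc i).sub continuous_const).mul (hd i)
  rw [advComm, advComm, h, hφ.Pse_add S hsum (by fun_prop), hφ.Pse_add S (by fun_prop)
    (by fun_prop), hφ.Pse_add S (by fun_prop) (by fun_prop), Pse_const_mul, Pse_const_mul,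
    Pse_const_mul, ← hφ.partialX_Pse S hF hp, ← hφ.partialX_Pse S hF hp,
    ← hφ.partialX_Pse S hF hp]
  simp only [Fin.sum_univ_three, Pi.sub_apply]
  ring

theorem IsCutoff.advComm_mul_sub_const {φ : V3 → ℝ} (hφ : IsCutoff φ) (S : ℝ) {u : V3 → V3}
    (hu : ContDiff ℝ (⊤ : ℕ∞) u) {F G : V3 → ℝ} (hF : ContDiff ℝ (⊤ : ℕ∞) F) (hp : PerSpace F)
    (hG : ContDiff ℝ (⊤ : ℕ∞) G) (hpG : PerSpace G) (c : ℝ) (x : V3) :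
    advComm φ S u (fun y => F y * (G y - c)) x
      = advComm φ S u (fun y => F y * G y) x - c * advComm φ S u F x := by
  have huc : ∀ i, Continuous fun y => u y i := fun i => (continuous_apply i).comp hu.continuous
  have hGc : ContDiff ℝ (⊤ : ℕ∞) fun y => G y - c := hG.sub contDiff_const
  have hFG := hF.mul hGc
  have hpFG := hp.mul (hpG.sub_const c)
  have hdec : (fun y => F y * G y) = fun y => F y * (G y - c) + c * F y := by
    ext y
    ring
  have hP : Pse φ S (fun y => F y * G y)
      = fun x => Pse φ S (fun y => F y * (G y - c)) x + c * Pse φ S F x := by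
    have hcF : Continuous fun y => c * F y := continuous_const.mul hF.continuous
    ext x
    rw [hdec, hφ.Pse_add S hFG.continuous hcF, Pse_const_mul]
  have hdP : ∀ i, partialX i (Pse φ S fun y => F y * G y) x
      = partialX i (Pse φ S fun y => F y * (G y - c)) x + c * partialX i (Pse φ S F) x := by
    intro i
    have d1 := (hφ.contDiff_Pse S fun y => F y * (G y - c)).differentiable (by simp) x
    have d2 := (hφ.contDiff_Pse S F).differentiable (by simp) x
    rw [hP]
    simp only [partialX]
    rw [fderiv_fun_add d1 (d2.const_mul c), fderiv_const_mul d2]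
    simp
  have hd : ∀ i y, partialX i (fun y => F y * G y) y
      = partialX i (fun y => F y * (G y - c)) y + c * partialX i F y := by
    intro i y
    rw [partialX_mul hF hG, partialX_mul hF hGc, partialX_sub_const]
    ring
  have hsum : (fun y => ∑ i, u y i * partialX i (fun y => F y * G y) y) = fun y =>
      (∑ i, u y i * partialX i (fun y => F y * (G y - c)) y)
        + c * ∑ i, u y i * partialX i F y := by
    ext y
    simp only [hd, mul_add, Finset.sum_add_distrib, Finset.mul_sum]
    congr 1
    exact Finset.sum_congr rfl fun i _ => by ring
  have hc : ∀ H : V3 → ℝ, ContDiff ℝ (⊤ : ℕ∞) H →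
      Continuous fun y => ∑ i, u y i * partialX i H y := fun H hH =>
    continuous_finsetSum _ fun i _ => (huc i).mul (contDiff_partialX hH i).continuous
  have hcs : Continuous fun y => c * ∑ i, u y i * partialX i F y := continuous_const.mul (hc F hF)
  rw [advComm, advComm, advComm, hsum, hφ.Pse_add S (hc _ hFG) hcs, Pse_const_mul]
  simp only [hdP, Fin.sum_univ_three]
  ring

/-- The double commutator only depends on `u` and `G` up to additive constants. -/
theorem IsCutoff.double_advComm_sub_const {φ : V3 → ℝ} (hφ : IsCutoff φ) (S : ℝ) {u : V3 → V3}
    (hu : ContDiff ℝ (⊤ : ℕ∞) u) {F G : V3 → ℝ} (hF : ContDiff ℝ (⊤ : ℕ∞) F) (hp : PerSpace F)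
    (hG : ContDiff ℝ (⊤ : ℕ∞) G) (hpG : PerSpace G) (b : V3) (c : ℝ) (x : V3) :
    advComm φ S (fun y => u y - b) (fun y => F y * (G y - c)) x
        - advComm φ S (fun y => u y - b) F x * (G x - c)
      = advComm φ S u (fun y => F y * G y) x - advComm φ S u F x * G x := by
  rw [hφ.advComm_mul_sub_const S (hu.sub contDiff_const) hF hp hG hpG,
    hφ.advComm_sub_const S hu (hF.mul hG) (hp.mul hpG), hφ.advComm_sub_const S hu hF hp]
  ring

/-- `A` is smooth and its derivatives of order `n ≤ m` at `x` are bounded by `α q ^ n`. -/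
structure DerivBound (q : ℝ) (m : ℕ) (x : V3) (A : V3 → ℝ) (α : ℝ) : Prop where
  contDiff : ContDiff ℝ (⊤ : ℕ∞) A
  bound : ∀ n ≤ m, ‖iteratedFDeriv ℝ n A x‖ ≤ α * q ^ n

namespace DerivBound

variable {q : ℝ} {m : ℕ} {x : V3} {A B : V3 → ℝ} {α β : ℝ}

theorem nonneg (h : DerivBound q m x A α) : 0 ≤ α := by
  simpa using (norm_nonneg _).trans (h.bound 0 (Nat.zero_le _))

theorem add (hA : DerivBound q m x A α) (hB : DerivBound q m x B β) :
    DerivBound q m x (fun y => A y + B y) (α + β) := by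
  refine ⟨hA.contDiff.add hB.contDiff, fun n hn => ?_⟩
  change ‖iteratedFDeriv ℝ n (A + B) x‖ ≤ _
  rw [iteratedFDeriv_add_apply (hA.contDiff.of_le (by exact_mod_cast le_top)).contDiffAt
    (hB.contDiff.of_le (by exact_mod_cast le_top)).contDiffAt, add_mul]
  exact (norm_add_le _ _).trans (add_le_add (hA.bound n hn) (hB.bound n hn))

theorem sub (hA : DerivBound q m x A α) (hB : DerivBound q m x B β) :
    DerivBound q m x (fun y => A y - B y) (α + β) := by
  refine ⟨hA.contDiff.sub hB.contDiff, fun n hn => ?_⟩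
  change ‖iteratedFDeriv ℝ n (A - B) x‖ ≤ _
  rw [iteratedFDeriv_sub_apply (hA.contDiff.of_le (by exact_mod_cast le_top)).contDiffAt
    (hB.contDiff.of_le (by exact_mod_cast le_top)).contDiffAt, add_mul]
  exact (norm_sub_le _ _).trans (add_le_add (hA.bound n hn) (hB.bound n hn))

theorem sum {A : Fin 3 → V3 → ℝ} (hA : ∀ i, DerivBound q m x (A i) α) :
    DerivBound q m x (fun y => ∑ i, A i y) (3 * α) := by
  simp only [Fin.sum_univ_three]
  convert ((hA 0).add (hA 1)).add (hA 2) using 1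
  ring

theorem mul (hq : 0 ≤ q) (hA : DerivBound q m x A α) (hB : DerivBound q m x B β) :
    DerivBound q m x (fun y => A y * B y) (2 ^ m * (α * β)) := by
  refine ⟨hA.contDiff.mul hB.contDiff, fun n hn => ?_⟩
  have hα := hA.nonneg
  have hβ := hB.nonneg
  calc _ ≤ ∑ i ∈ Finset.range (n + 1), (n.choose i : ℝ) * ‖iteratedFDeriv ℝ i A x‖
          * ‖iteratedFDeriv ℝ (n - i) B x‖ :=
        norm_iteratedFDeriv_mul_le hA.contDiff hB.contDiff x (by exact_mod_cast le_top)
    _ ≤ ∑ i ∈ Finset.range (n + 1), (n.choose i : ℝ) * (α * β * q ^ n) := by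
        refine Finset.sum_le_sum fun i hi => ?_
        have hi : i ≤ n := Nat.lt_succ_iff.1 (Finset.mem_range.1 hi)
        rw [mul_assoc]
        refine mul_le_mul_of_nonneg_left ?_ (by positivity)
        calc _ ≤ (α * q ^ i) * (β * q ^ (n - i)) := by
              gcongr
              · exact hA.bound i (hi.trans hn)
              · exact hB.bound (n - i) ((Nat.sub_le _ _).trans hn)
          _ = α * β * (q ^ i * q ^ (n - i)) := by ring
          _ = _ := by rw [← pow_add, Nat.add_sub_cancel' hi]
    _ = 2 ^ n * (α * β * q ^ n) := by
        rw [← Finset.sum_mul]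
        congr 1
        exact_mod_cast Nat.sum_range_choose n
    _ ≤ 2 ^ m * (α * β * q ^ n) := by
        gcongr
        norm_num
    _ = _ := by ring

theorem partialX (hA : DerivBound q (m + 1) x A α) (i : Fin 3) :
    DerivBound q m x (partialX i A) (α * q) := by
  refine ⟨contDiff_partialX hA.contDiff i, fun n hn => ?_⟩
  have he : ‖e3 i‖ ≤ 1 := by
    rw [e3, Pi.norm_single, norm_one]
  have hT : ‖ContinuousLinearMap.apply ℝ ℝ (e3 i)‖ ≤ 1 :=
    ContinuousLinearMap.opNorm_le_bound _ zero_le_one fun T => by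
      rw [ContinuousLinearMap.apply_apply, one_mul]
      exact (T.le_opNorm _).trans (mul_le_of_le_one_right (norm_nonneg _) he)
  have hfd : ContDiff ℝ (⊤ : ℕ∞) (fderiv ℝ A) :=
    hA.contDiff.fderiv_right (m := (⊤ : ℕ∞)) (by exact_mod_cast le_top)
  calc ‖iteratedFDeriv ℝ n (ContinuousLinearMap.apply ℝ ℝ (e3 i) ∘ fderiv ℝ A) x‖
      ≤ ‖ContinuousLinearMap.apply ℝ ℝ (e3 i)‖ * ‖iteratedFDeriv ℝ n (fderiv ℝ A) x‖ :=
        ContinuousLinearMap.norm_iteratedFDeriv_comp_left _ hfd.contDiffAt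
          (by exact_mod_cast le_top)
    _ ≤ 1 * (α * q ^ (n + 1)) := by
        rw [norm_iteratedFDeriv_fderiv]
        exact mul_le_mul hT (hA.bound (n + 1) (by linarith)) (norm_nonneg _) zero_le_one
    _ = _ := by ring

end DerivBound

theorem two_zpow_Jof_bounds {q : ℝ} (hq : 1 ≤ q) :
    1 ≤ (2 : ℝ) ^ Jof q ∧ (2 : ℝ) ^ Jof q ≤ q ∧ q ≤ 2 * (2 : ℝ) ^ Jof q := by
  have hq0 : 0 < q := by linarith
  have e : (2 : ℝ) ^ Real.logb 2 q = q := Real.rpow_logb two_pos (by norm_num) hq0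
  refine ⟨one_le_zpow₀ one_le_two (Int.floor_nonneg.2 (Real.logb_nonneg one_lt_two hq)), ?_, ?_⟩
  · rw [← Real.rpow_intCast]
    calc _ ≤ (2 : ℝ) ^ Real.logb 2 q :=
          Real.rpow_le_rpow_of_exponent_le one_le_two (Int.floor_le _)
      _ = q := e
  · rw [← zpow_one_add₀ two_ne_zero, ← Real.rpow_intCast]
    calc q = (2 : ℝ) ^ Real.logb 2 q := e.symm
      _ ≤ _ := Real.rpow_le_rpow_of_exponent_le one_le_two (by
          push_cast
          rw [add_comm]
          exact (Int.lt_floor_add_one _).le)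

theorem IsCutoff.exists_derivBound_Pse {φ : V3 → ℝ} (hφ : IsCutoff φ) (m : ℕ) :
    ∃ C : ℝ, 0 ≤ C ∧ ∀ q : ℝ, 1 ≤ q → ∀ H : V3 → ℝ, Continuous H → PerSpace H →
      ∀ (x : V3) (M : ℝ), 0 ≤ M → ∀ a : ℕ, a ≤ 2 → (∀ y, |H (x + y)| ≤ M * ‖y‖ ^ a) →
        DerivBound q m x (Pse φ q H) (C * M * q⁻¹ ^ a) := by
  choose C hC hB using fun n =>
    exists_norm_iteratedFDeriv_fourierMul_le n hφ.contDiff_ofReal hφ.hasCompactSupport_ofReal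
  refine ⟨4 * ∑ n ∈ Finset.range (m + 1), C n,
    mul_nonneg (by norm_num) (Finset.sum_nonneg fun n _ => hC n), ?_⟩
  intro q hq H hc hp x M hM a ha hH
  obtain ⟨h1, h2, h3⟩ := two_zpow_Jof_bounds hq
  refine ⟨hφ.contDiff_Pse q H, fun n hn => ?_⟩
  set L := (2 : ℝ) ^ Jof q
  have hq0 : 0 < q := by linarith
  have hL0 : 0 < L := by linarith
  have hCn : C n ≤ ∑ n ∈ Finset.range (m + 1), C n :=
    Finset.single_le_sum (fun n _ => hC n) (Finset.mem_range.2 (Nat.lt_succ_iff.2 hn))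
  have hLi : L⁻¹ ≤ 2 * q⁻¹ := by
    rw [inv_le_iff_one_le_mul₀ hL0]
    field_simp
    linarith
  have hLa : L⁻¹ ^ a ≤ 4 * q⁻¹ ^ a := calc
    L⁻¹ ^ a ≤ (2 * q⁻¹) ^ a := by gcongr
    _ = 2 ^ a * q⁻¹ ^ a := mul_pow _ _ _
    _ ≤ 2 ^ 2 * q⁻¹ ^ a := by
      gcongr
      norm_num
    _ = _ := by norm_num
  have hC0 := hC n
  have hS0 := hC0.trans hCn
  calc ‖iteratedFDeriv ℝ n (Complex.reCLM ∘ fourierMul (fun ξ => (φ ξ : ℂ)) L H) x‖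
      ≤ ‖Complex.reCLM‖ * ‖iteratedFDeriv ℝ n (fourierMul (fun ξ => (φ ξ : ℂ)) L H) x‖ :=
        ContinuousLinearMap.norm_iteratedFDeriv_comp_left _
          (contDiff_fourierMul hφ.hasCompactSupport_ofReal hL0 H).contDiffAt
          (by exact_mod_cast le_top)
    _ ≤ C n * M * L⁻¹ ^ a * L ^ n := by
        rw [Complex.reCLM_norm, one_mul]
        exact hB n L h1 H hc hp x M hM a ha hH
    _ ≤ (∑ n ∈ Finset.range (m + 1), C n) * M * (4 * q⁻¹ ^ a) * q ^ n := by
        generalize ∑ n ∈ Finset.range (m + 1), C n = D at hCn hS0 ⊢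
        gcongr
    _ = _ := by ring

theorem DerivBound.mono {q : ℝ} (hq : 0 ≤ q) {k m : ℕ} (hkm : k ≤ m) {x : V3} {A : V3 → ℝ}
    {α β : ℝ} (hαβ : α ≤ β) (hA : DerivBound q m x A α) : DerivBound q k x A β :=
  ⟨hA.contDiff, fun n hn => (hA.bound n (hn.trans hkm)).trans (by gcongr)⟩

theorem PerSpace.sum {A : Fin 3 → V3 → ℝ} (hA : ∀ i, PerSpace (A i)) :
    PerSpace fun y => ∑ i, A i y := fun x n => by
  dsimp only
  exact Finset.sum_congr rfl fun i _ => hA i x n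

theorem abs_sum_mul_le {a b : Fin 3 → ℝ} {α β : ℝ} (hα : 0 ≤ α) (ha : ∀ i, |a i| ≤ α)
    (hb : ∀ i, |b i| ≤ β) : |∑ i, a i * b i| ≤ 3 * (α * β) := by
  calc |∑ i, a i * b i| ≤ ∑ i, |a i * b i| := Finset.abs_sum_le_sum_abs _ _
    _ ≤ ∑ _i : Fin 3, α * β := Finset.sum_le_sum fun i _ => by
        rw [abs_mul]
        exact mul_le_mul (ha i) (hb i) (abs_nonneg _) hα
    _ = _ := by simp

theorem IsCutoff.exists_derivBound_double_advComm {φ : V3 → ℝ} (hφ : IsCutoff φ) (m : ℕ) :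
    ∃ C : ℝ, 0 < C ∧ ∀ q : ℝ, 1 ≤ q → ∀ (u : V3 → V3) (F G : V3 → ℝ),
      ContDiff ℝ (⊤ : ℕ∞) u → (∀ i, PerSpace fun y => u y i) →
      ContDiff ℝ (⊤ : ℕ∞) F → PerSpace F → ContDiff ℝ (⊤ : ℕ∞) G → PerSpace G →
      ∀ (x : V3) (vF gF Cf Cdf : ℝ),
        (∀ i, DerivBound q m x (fun y => u y i - u x i) vF) →
        DerivBound q m x (fun y => G y - G x) (q⁻¹ * gF) →
        (∀ i y, |u (x + y) i - u x i| ≤ q * vF * ‖y‖) →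
        (∀ y, |G (x + y) - G x| ≤ gF * ‖y‖) →
        (∀ i y, |partialX i F y| ≤ Cdf) → (∀ i y, |partialX i G y| ≤ gF) →
        (∀ y, |F y| ≤ Cf) →
        DerivBound q m x
          (fun y => advComm φ q u (fun z => F z * G z) y - advComm φ q u F y * G y)
          (C * (q⁻¹ * Cdf + Cf) * vF * gF) := by
  obtain ⟨C, hC, hP⟩ := hφ.exists_derivBound_Pse (m + 1)
  set K : ℝ := 2 ^ m with hK
  have hK0 : 0 ≤ K := by positivity
  refine ⟨6 * K * C + 3 * C + 3 * K ^ 2 * C + 1, by positivity, ?_⟩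
  intro q hq u F G hu hpu hF hpF hG hpG x vF gF Cf Cdf bU bG hU hΓ hdF hdG hF0
  have hq0 : 0 < q := by linarith
  have hCf : 0 ≤ Cf := (abs_nonneg _).trans (hF0 0)
  have hCdf : 0 ≤ Cdf := (abs_nonneg _).trans (hdF 0 0)
  have hgF : 0 ≤ gF := (abs_nonneg _).trans (hdG 0 0)
  have hvF : 0 ≤ vF := (bU 0).nonneg
  have cU : ∀ i, Continuous fun y => u y i - u x i := fun i => (bU i).contDiff.continuous
  have pU : ∀ i, PerSpace fun y => u y i - u x i := fun i => (hpu i).sub_const _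
  have cG := bG.contDiff.continuous
  have pG : PerSpace fun y => G y - G x := hpG.sub_const _
  have cdF : ∀ i, Continuous (partialX i F) := fun i => (contDiff_partialX hF i).continuous
  have cdG : ∀ i, Continuous (partialX i G) := fun i => (contDiff_partialX hG i).continuous
  have cF := hF.continuous
  have c1 : Continuous fun y => ∑ i, (u y i - u x i) * (partialX i F y * (G y - G x)) :=
    continuous_finsetSum _ fun i _ => (cU i).mul ((cdF i).mul cG)
  have c2 : Continuous fun y => ∑ i, (u y i - u x i) * (F y * partialX i G y) :=
    continuous_finsetSum _ fun i _ => (cU i).mul (cF.mul (cdG i))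
  have c3 : Continuous fun y => ∑ i, (u y i - u x i) * partialX i F y :=
    continuous_finsetSum _ fun i _ => (cU i).mul (cdF i)
  have key : (fun y => advComm φ q u (fun z => F z * G z) y - advComm φ q u F y * G y)
      = fun y => ((∑ i, (u y i - u x i) * partialX i (Pse φ q fun z => F z * (G z - G x)) y)
          - (Pse φ q (fun y => ∑ i, (u y i - u x i) * (partialX i F y * (G y - G x))) y
            + Pse φ q (fun y => ∑ i, (u y i - u x i) * (F y * partialX i G y)) y))
        - ((∑ i, (u y i - u x i) * partialX i (Pse φ q F) y)
            - Pse φ q (fun y => ∑ i, (u y i - u x i) * partialX i F y) y) * (G y - G x) := by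
    ext y
    rw [← hφ.double_advComm_sub_const q hu hF hpF hG hpG (u x) (G x), ← hφ.Pse_add q c1 c2]
    simp only [advComm, Pi.sub_apply, partialX_mul hF bG.contDiff, partialX_sub_const, mul_add,
      Finset.sum_add_distrib]
  have B1 := hP q hq (fun y => F y * (G y - G x)) (cF.mul cG) (hpF.mul pG) x (Cf * gF)
    (by positivity) 1 (by norm_num) fun y => by
      rw [abs_mul, pow_one, mul_assoc]
      exact mul_le_mul (hF0 _) (hΓ y) (abs_nonneg _) hCf
  have B2 := hP q hq _ c1 (PerSpace.sum fun i => (pU i).mul ((hpF.partialX i).mul pG)) x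
    (3 * (q * vF * (Cdf * gF))) (by positivity) 2 le_rfl fun y => by
      refine (abs_sum_mul_le (by positivity) (fun i => hU i y)
        (β := Cdf * (gF * ‖y‖)) fun i => ?_).trans (le_of_eq (by ring))
      rw [abs_mul]
      exact mul_le_mul (hdF i _) (hΓ y) (abs_nonneg _) hCdf
  have B3 := hP q hq _ c2 (PerSpace.sum fun i => (pU i).mul (hpF.mul (hpG.partialX i))) x
    (3 * (q * vF * (Cf * gF))) (by positivity) 1 (by norm_num) fun y => by
      refine (abs_sum_mul_le (by positivity) (fun i => hU i y)
        (β := Cf * gF) fun i => ?_).trans (le_of_eq (by ring))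
      rw [abs_mul]
      exact mul_le_mul (hF0 _) (hdG i _) (abs_nonneg _) hCf
  have B4 := hP q hq F cF hpF x Cf hCf 0 (by norm_num) fun y => by
    simpa using hF0 (x + y)
  have B5 := hP q hq _ c3 (PerSpace.sum fun i => (pU i).mul (hpF.partialX i)) x
    (3 * (q * vF * Cdf)) (by positivity) 1 (by norm_num) fun y =>
      (abs_sum_mul_le (by positivity) (fun i => hU i y) fun i => hdF i _).trans
        (le_of_eq (by ring))
  rw [key]
  have hm : m ≤ m + 1 := Nat.le_succ m
  refine DerivBound.mono hq0.le le_rfl ?_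
    (((DerivBound.sum fun i => (bU i).mul hq0.le (B1.partialX i)).sub
      ((B2.mono hq0.le hm le_rfl).add (B3.mono hq0.le hm le_rfl))).sub
      (((DerivBound.sum fun i => (bU i).mul hq0.le (B4.partialX i)).sub
        (B5.mono hq0.le hm le_rfl)).mul hq0.le bG))
  rw [← hK]
  have e : q * q⁻¹ = 1 := mul_inv_cancel₀ hq0.ne'
  have hi : 0 ≤ q⁻¹ := by positivity
  calc _ = 3 * K * C * (q * q⁻¹) * (vF * Cf * gF) + 3 * C * (q * q⁻¹) * (q⁻¹ * vF * Cdf * gF)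
        + 3 * C * (q * q⁻¹) * (vF * Cf * gF) + 3 * K ^ 2 * C * (q * q⁻¹) * (vF * Cf * gF)
        + 3 * K * C * (q * q⁻¹) * (q⁻¹ * vF * Cdf * gF) := by ring
    _ = (3 * K * C + 3 * C + 3 * K ^ 2 * C) * (vF * Cf * gF)
        + (3 * C + 3 * K * C) * (q⁻¹ * vF * Cdf * gF) := by
        rw [e]
        ring
    _ ≤ (6 * K * C + 3 * C + 3 * K ^ 2 * C + 1) * (vF * Cf * gF)
        + (6 * K * C + 3 * C + 3 * K ^ 2 * C + 1) * (q⁻¹ * vF * Cdf * gF) := by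
        have h1 : 0 ≤ K * C := by positivity
        have h2 : 0 ≤ K ^ 2 * C := by positivity
        exact add_le_add (mul_le_mul_of_nonneg_right (by linarith) (by positivity))
          (mul_le_mul_of_nonneg_right (by linarith) (by positivity))
    _ = _ := by ring

theorem norm_fderiv_eq_norm_iteratedFDeriv_one {E : Type*} [NormedAddCommGroup E]
    [NormedSpace ℝ E] (A : V3 → E) (y : V3) : ‖fderiv ℝ A y‖ = ‖iteratedFDeriv ℝ 1 A y‖ := by
  rw [← zero_add 1, ← norm_iteratedFDeriv_fderiv, norm_iteratedFDeriv_zero]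

theorem norm_add_sub_le_of_iteratedFDeriv_one {E : Type*} [NormedAddCommGroup E]
    [NormedSpace ℝ E] {A : V3 → E} (hA : ContDiff ℝ (⊤ : ℕ∞) A) {B : ℝ}
    (hB : ∀ y, ‖iteratedFDeriv ℝ 1 A y‖ ≤ B) (x y : V3) : ‖A (x + y) - A x‖ ≤ B * ‖y‖ := by
  have := Convex.norm_image_sub_le_of_norm_fderiv_le (𝕜 := ℝ) (f := A)
    (s := Set.univ) (x := x) (y := x + y) (C := B)
    (fun z _ => hA.differentiable (by simp) z)
    (fun z _ => by
      rw [norm_fderiv_eq_norm_iteratedFDeriv_one]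
      exact hB z) convex_univ trivial trivial
  simpa using this

theorem abs_partialX_le (A : V3 → ℝ) {B : ℝ}
    (hB : ∀ y, ‖iteratedFDeriv ℝ 1 A y‖ ≤ B) (i : Fin 3) (y : V3) : |partialX i A y| ≤ B := by
  have he : ‖e3 i‖ ≤ 1 := by
    rw [e3, Pi.norm_single, norm_one]
  calc |partialX i A y| ≤ ‖fderiv ℝ A y‖ * ‖e3 i‖ := (fderiv ℝ A y).le_opNorm _
    _ ≤ ‖fderiv ℝ A y‖ := mul_le_of_le_one_right (norm_nonneg _) he
    _ ≤ B := by
      rw [norm_fderiv_eq_norm_iteratedFDeriv_one]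
      exact hB y

/-- A smooth function minus its value at `x` satisfies a `DerivBound` at `x` as soon as its
derivatives of positive order do. -/
theorem derivBound_sub_self {q : ℝ} {m : ℕ} {x : V3} {A : V3 → ℝ} {α : ℝ}
    (hα : 0 ≤ α) (hA : ContDiff ℝ (⊤ : ℕ∞) A)
    (h : ∀ n, 1 ≤ n → n ≤ m → ‖iteratedFDeriv ℝ n A x‖ ≤ α * q ^ n) :
    DerivBound q m x (fun y => A y - A x) α := by
  refine ⟨hA.sub contDiff_const, fun n hn => ?_⟩
  rcases n with _ | n
  · simpa using hα
  · have e : iteratedFDeriv ℝ (n + 1) (fun y => A y - A x) x = iteratedFDeriv ℝ (n + 1) A x := by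
      have := iteratedFDeriv_sub_apply (i := n + 1) (x := x)
        ((hA.of_le (by exact_mod_cast le_top)).contDiffAt)
        ((contDiff_const (c := A x)).contDiffAt)
      rw [iteratedFDeriv_const_of_ne (Nat.succ_ne_zero n)] at this
      exact this.trans (sub_zero _)
    rw [e]
    exact h _ (Nat.succ_pos n) hn

theorem norm_iteratedFDeriv_component_le {u : V3 → V3} (hu : ContDiff ℝ (⊤ : ℕ∞) u) (i : Fin 3)
    (n : ℕ) (x : V3) :
    ‖iteratedFDeriv ℝ n (fun y => u y i) x‖ ≤ ‖iteratedFDeriv ℝ n u x‖ := by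
  have hT : ‖ContinuousLinearMap.proj (R := ℝ) (φ := fun _ : Fin 3 => ℝ) i‖ ≤ 1 :=
    ContinuousLinearMap.opNorm_le_bound _ zero_le_one fun z => by
      rw [one_mul]
      exact norm_le_pi_norm z i
  calc ‖iteratedFDeriv ℝ n (ContinuousLinearMap.proj (R := ℝ) (φ := fun _ : Fin 3 => ℝ) i ∘ u) x‖
      ≤ ‖ContinuousLinearMap.proj (R := ℝ) (φ := fun _ : Fin 3 => ℝ) i‖
          * ‖iteratedFDeriv ℝ n u x‖ :=
        ContinuousLinearMap.norm_iteratedFDeriv_comp_left _ hu.contDiffAt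
          (by exact_mod_cast le_top)
    _ ≤ _ := mul_le_of_le_one_left (norm_nonneg _) hT

theorem contDiff_slice {E : Type*} [NormedAddCommGroup E] [NormedSpace ℝ E] {A : ℝ × V3 → E}
    (hA : ContDiff ℝ (⊤ : ℕ∞) A) (t : ℝ) : ContDiff ℝ (⊤ : ℕ∞) fun y => A (t, y) :=
  hA.comp (contDiff_const.prodMk contDiff_id)

/-- **Double commutator estimate.**  If `‖v‖_N ≤ ℓ^{-N} v_F` and `‖g‖_N ≤ g_F` for
`1 ≤ N ≤ N̄`, then for every smooth `f` and `0 ≤ N ≤ N̄`,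
`‖[v·∇, P_{≤ℓ⁻¹}](fg) - ([v·∇, P_{≤ℓ⁻¹}]f)·g‖_N ≤ C (ℓ^{1-N} ‖∇f‖₀ + ℓ^{-N} ‖f‖₀) v_F g_F`,
with `C = C(N̄, φ)`. -/
theorem statement15 (φ : V3 → ℝ) (hφ : IsCutoff φ) (Nbar : ℕ) (hNbar : 1 ≤ Nbar) :
    ∃ C : ℝ, 0 < C ∧
      ∀ T : ℝ, 0 < T →
      ∀ ℓ : ℝ, 0 < ℓ → ℓ < 1 →
      ∀ (v : ℝ × V3 → V3) (g : ℝ × V3 → ℝ),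
        ContDiff ℝ (⊤ : ℕ∞) v → PerSpaceT v → ContDiff ℝ (⊤ : ℕ∞) g → PerSpaceT g →
      ∀ vF gF : ℝ, 0 < vF → 0 < gF →
        (∀ t ∈ Set.Icc (0 : ℝ) T, ∀ x : V3, ∀ n : ℕ, 1 ≤ n → n ≤ Nbar →
          ‖iteratedFDeriv ℝ n (fun y => v (t, y)) x‖ ≤ ℓ ^ (-(n : ℝ)) * vF) →
        (∀ t ∈ Set.Icc (0 : ℝ) T, ∀ x : V3, ∀ n : ℕ, 1 ≤ n → n ≤ Nbar →
          ‖iteratedFDeriv ℝ n (fun y => g (t, y)) x‖ ≤ gF) →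
      ∀ f : ℝ × V3 → ℝ, ContDiff ℝ (⊤ : ℕ∞) f → PerSpaceT f →
      ∀ Cf Cdf : ℝ,
        (∀ t ∈ Set.Icc (0 : ℝ) T, ∀ x : V3, |f (t, x)| ≤ Cf) →
        (∀ t ∈ Set.Icc (0 : ℝ) T, ∀ x : V3,
          ‖iteratedFDeriv ℝ 1 (fun y => f (t, y)) x‖ ≤ Cdf) →
      ∀ N : ℕ, N ≤ Nbar →
      ∀ t ∈ Set.Icc (0 : ℝ) T, ∀ x : V3, ∀ n : ℕ, n ≤ N →
        ‖iteratedFDeriv ℝ n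
            (fun y => commAdv φ ℓ v (fun s => f s * g s) (t, y)
              - commAdv φ ℓ v f (t, y) * g (t, y)) x‖
          ≤ C * (ℓ ^ ((1 : ℝ) - N) * Cdf + ℓ ^ (-(N : ℝ)) * Cf) * vF * gF := by
  obtain ⟨C, hC, hD⟩ := hφ.exists_derivBound_double_advComm Nbar
  refine ⟨C, hC, ?_⟩
  intro T _ ℓ hℓ0 hℓ1 v g hv hpv hg hpg vF gF hvF hgF hvb hgb f hf hpf Cf Cdf hfb hdfb N hN t ht x
    n hn
  have hq : 1 ≤ ℓ⁻¹ := (one_le_inv₀ hℓ0).2 hℓ1.le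
  have hpow : ∀ k : ℕ, ℓ ^ (-(k : ℝ)) = ℓ⁻¹ ^ k := fun k => by
    rw [Real.rpow_neg hℓ0.le, Real.rpow_natCast, inv_pow]
  have hu := contDiff_slice hv t
  have hF := contDiff_slice hf t
  have hG := contDiff_slice hg t
  have hv1 : ∀ y, ‖iteratedFDeriv ℝ 1 (fun z => v (t, z)) y‖ ≤ ℓ⁻¹ * vF := fun y => by
    have := hvb t ht y 1 le_rfl hNbar
    rwa [hpow, pow_one] at this
  have hg1 : ∀ y, ‖iteratedFDeriv ℝ 1 (fun z => g (t, z)) y‖ ≤ gF := fun y =>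
    hgb t ht y 1 le_rfl hNbar
  have hB := hD ℓ⁻¹ hq (fun y => v (t, y)) (fun y => f (t, y)) (fun y => g (t, y)) hu
    (fun i y k => congrFun (hpv t y k) i) hF (fun y k => hpf t y k) hG (fun y k => hpg t y k)
    x vF gF Cf Cdf
    (fun i => derivBound_sub_self hvF.le (contDiff_pi.1 hu i) fun k h1 h2 => by
      rw [mul_comm, ← hpow]
      exact (norm_iteratedFDeriv_component_le hu i k x).trans (hvb t ht x k h1 h2))
    (derivBound_sub_self (by positivity) hG fun k h1 h2 => by
      refine (hgb t ht x k h1 h2).trans ?_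
      obtain ⟨j, rfl⟩ : ∃ j, k = j + 1 := ⟨k - 1, by lia⟩
      have h3 := one_le_pow₀ hq (n := j)
      rw [inv_inv, pow_succ']
      field_simp
      simpa using h3)
    (fun i y => (norm_le_pi_norm (v (t, x + y) - v (t, x)) i).trans
      (norm_add_sub_le_of_iteratedFDeriv_one hu hv1 x y))
    (fun y => norm_add_sub_le_of_iteratedFDeriv_one hG hg1 x y)
    (fun i y => abs_partialX_le _ (hdfb t ht) i y)
    (fun i y => abs_partialX_le _ hg1 i y)
    (fun y => hfb t ht y)
  calc _ ≤ C * (ℓ⁻¹⁻¹ * Cdf + Cf) * vF * gF * ℓ⁻¹ ^ n := hB.bound n (hn.trans hN)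
    _ ≤ C * (ℓ⁻¹⁻¹ * Cdf + Cf) * vF * gF * ℓ⁻¹ ^ N :=
        mul_le_mul_of_nonneg_left (pow_le_pow_right₀ hq hn) hB.nonneg
    _ = _ := by
        rw [hpow, sub_eq_add_neg, Real.rpow_add hℓ0, hpow, Real.rpow_one, inv_inv]
        ring
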